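/- arXiv:2105.09117 — 3 statements merged into one kernel-verified Lean document; each statement's English description precedes it below -/
import Mathlib

section
/- Let G be a finite group, let k ∈ G, and let N₁ and N₂ be normal subgroups of G with N₁ ∩ N₂ = 1. If the coset k·N₁ is a witness for the quotient group G/N₁ and the coset k·N₂ is a witness for G/N₂, then k is a witness for G. -/
/-- An element `k` of finite order `n` in a group `G` is a *witness* if the ordered
product `(x * k^(n-1)) * (x * k^(n-2)) * ⋯ * x` equals `1` for all `x ∈ G`. -/
def IsWitness {G : Type*} [Group G] (k : G) : Prop :=
  IsOfFinOrder k ∧ ∀ x : G,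
    ((List.range (orderOf k)).map (fun i => x * k ^ (orderOf k - 1 - i))).prod = 1

theorem prod_range_mul_eq_pow {M : Type*} [Monoid M] {k : M} {m : ℕ} (hk : k ^ m = 1)
    (x : M) (q : ℕ) :
    ((List.range (m * q)).map (fun i => x * k ^ (m * q - 1 - i))).prod =
      ((List.range m).map (fun i => x * k ^ (m - 1 - i))).prod ^ q := by
  induction q with
  | zero => simp
  | succ q ih =>
    rw [pow_succ, ← ih, Nat.mul_succ, List.range_add, List.map_append, List.prod_append,
      List.map_map]
    congr 2
    · refine List.map_congr_left fun i hi => ?_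
      have hi' := List.mem_range.mp hi
      rw [show m * q + m - 1 - i = (m * q - 1 - i) + m by omega, pow_add, hk, mul_one]
    · refine List.map_congr_left fun i _ => ?_
      rw [Function.comp_apply, show m * q + m - 1 - (m * q + i) = m - 1 - i by omega]

theorem IsWitness.prod_mem_of_quotient {G : Type*} [Group G] {k : G} {N : Subgroup G}
    [N.Normal] (hk : IsWitness (k : G ⧸ N)) (x : G) :
    ((List.range (orderOf k)).map (fun i => x * k ^ (orderOf k - 1 - i))).prod ∈ N := by
  obtain ⟨q, hq⟩ : orderOf (k : G ⧸ N) ∣ orderOf k := orderOf_map_dvd (QuotientGroup.mk' N) k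
  have hprod := prod_range_mul_eq_pow (pow_orderOf_eq_one (k : G ⧸ N)) (x : G ⧸ N) q
  rw [hk.2, one_pow, ← hq] at hprod
  rw [← QuotientGroup.eq_one_iff, ← QuotientGroup.mk'_apply, map_list_prod, List.map_map]
  exact hprod

/-- If `N₁` and `N₂` are normal subgroups of a finite group `G` intersecting trivially
and `k N₁`, `k N₂` are witnesses for `G/N₁` and `G/N₂` respectively, then `k` is a
witness for `G`. -/
theorem isWitness_of_quotients {G : Type*} [Group G] [Fintype G] (k : G)
    (N₁ N₂ : Subgroup G) [N₁.Normal] [N₂.Normal] (h : N₁ ⊓ N₂ = ⊥)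
    (h₁ : IsWitness (k : G ⧸ N₁)) (h₂ : IsWitness (k : G ⧸ N₂)) :
    IsWitness k := by
  refine ⟨isOfFinOrder_of_finite k, fun x => ?_⟩
  rw [← Subgroup.mem_bot, ← h]
  exact ⟨h₁.prod_mem_of_quotient x, h₂.prod_mem_of_quotient x⟩
end

section
/- Let G be a finite group of odd order whose centre Z(G) has exponent equal to the exponent of G. Then G is a J-group; moreover Z(G) ∩ W(G) = B(Z(G)), so in particular every element of Z(G) of order equal to the exponent of G is a witness for G. If additionally G is abelian, then W(G) = B(G). -/
/-- If `k` commutes with `x`, a product of factors `x * k ^ f i` collects into a power of `x`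
times a power of `k`. -/
theorem Commute.prod_map_range_mul_pow {M : Type*} [Monoid M] {x k : M} (h : Commute x k)
    (f : ℕ → ℕ) (m : ℕ) :
    ((List.range m).map (fun i => x * k ^ f i)).prod
      = x ^ m * k ^ (∑ i ∈ Finset.range m, f i) := by
  induction m with
  | zero => simp
  | succ m ih =>
    rw [List.range_succ, List.map_append, List.prod_append, ih, Finset.sum_range_succ,
      pow_succ, pow_add]
    simp only [List.map_cons, List.map_nil, List.prod_singleton]
    rw [mul_assoc, ← mul_assoc _ x, ← (h.pow_right _).eq]
    simp only [mul_assoc]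

/-- The sum of the exponents `0, …, n - 1` is a multiple of `n` when `n` is odd. -/
theorem Odd.dvd_sum_range_reflect {n : ℕ} (hn : Odd n) :
    n ∣ ∑ i ∈ Finset.range n, (n - 1 - i) := by
  rw [Finset.sum_range_reflect (fun i => i) n]
  have h : n ∣ (∑ i ∈ Finset.range n, i) * 2 := by
    rw [Finset.sum_range_id_mul_two]
    exact dvd_mul_right _ _
  exact (Nat.coprime_two_right.mpr hn).dvd_of_dvd_mul_right h

/-- A central element of odd order `n` is a witness exactly when every `n`-th power is trivial. -/
theorem isWitness_iff_of_mem_center {G : Type*} [Group G] {k : G}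
    (hk : k ∈ Subgroup.center G) (hn : Odd (orderOf k)) :
    IsWitness k ↔ ∀ x : G, x ^ orderOf k = 1 := by
  have hprod (x : G) :
      ((List.range (orderOf k)).map (fun i => x * k ^ (orderOf k - 1 - i))).prod
        = x ^ orderOf k := by
    have hc : Commute x k := Subgroup.mem_center_iff.mp hk x
    rw [hc.prod_map_range_mul_pow (fun i => orderOf k - 1 - i),
      orderOf_dvd_iff_pow_eq_one.mp hn.dvd_sum_range_reflect, mul_one]
  simp only [IsWitness, hprod, and_iff_right (orderOf_pos_iff.mp hn.pos)]

/-- In a finite group of odd order, a central element is a witness exactly when its order is the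
exponent of the group. -/
theorem isWitness_iff_orderOf_eq_exponent {G : Type*} [Group G] [Fintype G]
    (hodd : Odd (Fintype.card G)) {k : G} (hk : k ∈ Subgroup.center G) :
    IsWitness k ↔ orderOf k = Monoid.exponent G := by
  rw [isWitness_iff_of_mem_center hk (hodd.of_dvd_nat orderOf_dvd_card),
    ← Monoid.exponent_dvd_iff_forall_pow_eq_one]
  exact ⟨Nat.dvd_antisymm (Monoid.order_dvd_exponent k), fun h => h.symm.dvd⟩

/-- If `G` is a finite group of odd order with `exp(Z(G)) = exp(G)`, then `G` is a
`J`-group, the central witnesses are exactly the big elements of the centre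
(`Z(G) ∩ W(G) = B(Z(G))`), in particular `B(Z(G)) ⊆ W(G)`, and if `G` is abelian then
`W(G) = B(G)`. -/
theorem exp_center_eq_exp_isJGroup {G : Type*} [Group G] [Fintype G]
    (hodd : Odd (Fintype.card G))
    (hexp : Monoid.exponent (Subgroup.center G) = Monoid.exponent G) :
    (∃ k : G, IsWitness k) ∧
    (∀ k ∈ Subgroup.center G,
      (IsWitness k ↔ orderOf k = Monoid.exponent (Subgroup.center G))) ∧
    (∀ k ∈ Subgroup.center G,
      orderOf k = Monoid.exponent (Subgroup.center G) → IsWitness k) ∧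
    ((∀ a b : G, a * b = b * a) →
      ∀ k : G, IsWitness k ↔ orderOf k = Monoid.exponent G) := by
  have key (k : G) (hk : k ∈ Subgroup.center G) :
      IsWitness k ↔ orderOf k = Monoid.exponent (Subgroup.center G) := by
    rw [hexp, isWitness_iff_orderOf_eq_exponent hodd hk]
  refine ⟨?_, key, fun k hk => (key k hk).mpr, fun hcomm k =>
    isWitness_iff_orderOf_eq_exponent hodd (Subgroup.mem_center_iff.mpr fun g => hcomm g k)⟩
  open scoped IsMulCommutative in
  obtain ⟨z, hz⟩ := Monoid.exists_orderOf_eq_exponent (G := Subgroup.center G)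
    Monoid.ExponentExists.of_finite
  exact ⟨z, (key z z.2).mpr (by rw [Subgroup.orderOf_coe, hz])⟩
end

section
/- Let G be a finite group of odd order such that the exponent of the centre Z(G) is strictly less than the exponent of G. Then no element of Z(G) is a witness; that is, Z(G) ∩ W(G) = ∅. -/
/-- A common factor can be pulled out of an ordered product whose other factors are central. -/
theorem List.prod_map_mul_left_of_mem_center {G ι : Type*} [Group G] (x : G) (f : ι → G)
    (hf : ∀ i, f i ∈ Subgroup.center G) (l : List ι) :
    (l.map (fun i => x * f i)).prod = x ^ l.length * (l.map f).prod := by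
  induction l with
  | nil => simp
  | cons i l ih =>
    have h : x ^ l.length * f i = f i * x ^ l.length := Subgroup.mem_center_iff.mp (hf i) _
    simp only [List.map_cons, List.prod_cons, List.length_cons, ih, pow_succ', mul_assoc]
    rw [← mul_assoc (f i), ← h, mul_assoc]

/-- The order of a central witness annihilates the group. -/
theorem IsWitness.pow_orderOf_eq_one {G : Type*} [Group G] {k : G} (hw : IsWitness k)
    (hk : k ∈ Subgroup.center G) (x : G) : x ^ orderOf k = 1 := by
  have key (y : G) := hw.2 y
  simp only [List.prod_map_mul_left_of_mem_center _ (fun i => k ^ (orderOf k - 1 - i))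
    (fun i => pow_mem hk _), List.length_range] at key
  have h := key 1
  rw [one_pow, one_mul] at h
  simpa only [h, mul_one] using key x

/-- If `G` is a finite group of odd order with `exp(Z(G)) < exp(G)`, then no central
element is a witness: `Z(G) ∩ W(G) = ∅`. -/
theorem center_no_witness_of_exp_lt {G : Type*} [Group G] [Fintype G]
    (hodd : Odd (Fintype.card G))
    (hexp : Monoid.exponent (Subgroup.center G) < Monoid.exponent G) :
    ∀ k ∈ Subgroup.center G, ¬ IsWitness k := by
  intro k hk hw
  have hdvd : Monoid.exponent G ∣ orderOf k :=
    Monoid.exponent_dvd_of_forall_pow_eq_one (hw.pow_orderOf_eq_one hk)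
  have hcenter : orderOf k ∣ Monoid.exponent (Subgroup.center G) := by
    simpa only [Subgroup.orderOf_mk] using Monoid.order_dvd_exponent (⟨k, hk⟩ : Subgroup.center G)
  have hpos : 0 < Monoid.exponent (Subgroup.center G) :=
    Nat.pos_of_ne_zero Monoid.exponent_ne_zero_of_finite
  exact absurd (Nat.le_of_dvd hpos (hdvd.trans hcenter)) (not_le.mpr hexp)
end
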